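/- Suppose the memory-channel model with unitary U on H_M ⊗ H_S and initial memory state ξ_1 induces the same channel E on each of n successive uses with constant input state ρ. Then n(S(ρ) − S(E(ρ))) ≤ S(ξ_{n+1}) − S(ξ_1) ≤ log dim H_M, where ξ_{k+1} = Tr_S[U(ξ_k⊗ρ)U†]. -/

import Mathlib

open Matrix Kronecker BigOperators
open scoped ComplexOrder

noncomputable def vnEntropy {n : Type*} [Fintype n] [DecidableEq n] (ρ : Matrix n n ℂ) : ℝ :=
  if h : ρ.IsHermitian then ∑ i, Real.negMulLog (h.eigenvalues i) else 0

def IsDensity {n : Type*} [Fintype n] [DecidableEq n] (ρ : Matrix n n ℂ) : Prop :=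
  ρ.PosSemidef ∧ ρ.trace = 1

def IsUnitary {n : Type*} [Fintype n] [DecidableEq n] (U : Matrix n n ℂ) : Prop :=
  U * Uᴴ = 1 ∧ Uᴴ * U = 1

noncomputable def ptraceMem {μ s : Type*} [Fintype μ] (X : Matrix (μ × s) (μ × s) ℂ) : Matrix s s ℂ :=
  Matrix.of fun i j => ∑ a, X (a, i) (a, j)

noncomputable def ptraceSys {μ s : Type*} [Fintype s] (X : Matrix (μ × s) (μ × s) ℂ) : Matrix μ μ ℂ :=
  Matrix.of fun a b => ∑ i, X (a, i) (b, i)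

noncomputable def inducedChan {μ s : Type*} [Fintype μ] [Fintype s]
    (U : Matrix (μ × s) (μ × s) ℂ) (ξ : Matrix μ μ ℂ) (ρ : Matrix s s ℂ) : Matrix s s ℂ :=
  ptraceMem (U * (ξ ⊗ₖ ρ) * Uᴴ)

noncomputable def memUpdate {μ s : Type*} [Fintype μ] [Fintype s]
    (U : Matrix (μ × s) (μ × s) ℂ) (ξ : Matrix μ μ ℂ) (ρ : Matrix s s ℂ) : Matrix μ μ ℂ :=
  ptraceSys (U * (ξ ⊗ₖ ρ) * Uᴴ)

def ctrlU {μ s : Type*} [DecidableEq μ] (Uf : μ → Matrix s s ℂ) : Matrix (μ × s) (μ × s) ℂ :=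
  Matrix.of fun p q => if p.1 = q.1 then Uf p.1 p.2 q.2 else 0

def extendMap {n m : Type*} [Fintype n] [DecidableEq n]
    (E : Matrix n n ℂ →ₗ[ℂ] Matrix n n ℂ) (ρ : Matrix (n × m) (n × m) ℂ) :
    Matrix (n × m) (n × m) ℂ :=
  Matrix.of fun p q => E (Matrix.of fun i j => ρ (i, p.2) (j, q.2)) p.1 q.1

def IsCP {n : Type*} [Fintype n] [DecidableEq n]
    (E : Matrix n n ℂ →ₗ[ℂ] Matrix n n ℂ) : Prop :=
  ∀ (k : ℕ) (ρ : Matrix (n × Fin k) (n × Fin k) ℂ), ρ.PosSemidef → (extendMap E ρ).PosSemidef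

def IsTP {n : Type*} [Fintype n] [DecidableEq n]
    (E : Matrix n n ℂ →ₗ[ℂ] Matrix n n ℂ) : Prop :=
  ∀ ρ, (E ρ).trace = ρ.trace

noncomputable def mlog {n : Type*} [Fintype n] [DecidableEq n] (ρ : Matrix n n ℂ) :
    Matrix n n ℂ :=
  if h : ρ.IsHermitian then
    (h.eigenvectorUnitary : Matrix n n ℂ) *
      Matrix.diagonal (fun i => (Real.log (h.eigenvalues i) : ℂ)) *
      (h.eigenvectorUnitary : Matrix n n ℂ)ᴴ
  else 0

noncomputable def relEntropy {n : Type*} [Fintype n] [DecidableEq n]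
    (ρ ω : Matrix n n ℂ) : ℝ :=
  ((ρ * (mlog ρ - mlog ω)).trace).re

/-!
In one use of the channel the joint input `ξ ⊗ ρ` has entropy `S(ξ) + S(ρ)`, which the unitary
preserves; by subadditivity it is at most the sum `S(ξ') + S(E(ρ))` of the entropies of the two
marginals of the output. Thus `S(ρ) - S(E(ρ)) ≤ S(ξ') - S(ξ)`, whose right-hand side telescopes over
successive uses, and the entropy of the memory stays between `0` and `log dim H_M`.

Subadditivity is reduced to Shannon entropies: written in the product of the eigenbases of its
marginals, a bipartite state has a diagonal whose marginal distributions are the spectra of the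
reduced states. Passing to the diagonal does not decrease entropy, and Gibbs' inequality against the
product distribution finishes the proof.
-/

open Real (negMulLog)

section ClassicalEntropy

variable {ι κ : Type*} [Fintype ι] [Fintype κ]

lemma negMulLog_le_neg_mul_log_add_sub {p q : ℝ} (hp : 0 ≤ p) (hq : 0 ≤ q) (h : q = 0 → p = 0) :
    negMulLog p ≤ -(p * Real.log q) + (q - p) := by
  rcases eq_or_ne q 0 with rfl | hq0
  · simp [h rfl]
  calc negMulLog p = negMulLog (p / q * q) := by rw [div_mul_cancel₀ p hq0]
    _ = q * negMulLog (p / q) - p * Real.log q := by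
      rw [Real.negMulLog_mul, negMulLog, negMulLog]
      field_simp
      ring
    _ ≤ q * (1 - p / q) - p * Real.log q := by
      gcongr
      exact Real.negMulLog_le_one_sub_self (div_nonneg hp hq)
    _ = -(p * Real.log q) + (q - p) := by
      field_simp
      ring

theorem sum_negMulLog_le_neg_sum_mul_log {p q : ι → ℝ} (hp : ∀ i, 0 ≤ p i) (hq : ∀ i, 0 ≤ q i)
    (hpq : ∀ i, q i = 0 → p i = 0) (hsum : ∑ i, q i ≤ ∑ i, p i) :
    ∑ i, negMulLog (p i) ≤ -∑ i, p i * Real.log (q i) := by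
  calc ∑ i, negMulLog (p i) ≤ ∑ i, (-(p i * Real.log (q i)) + (q i - p i)) :=
        Finset.sum_le_sum fun i _ ↦ negMulLog_le_neg_mul_log_add_sub (hp i) (hq i) (hpq i)
    _ = -∑ i, p i * Real.log (q i) + (∑ i, q i - ∑ i, p i) := by
        rw [Finset.sum_add_distrib, Finset.sum_neg_distrib, Finset.sum_sub_distrib]
    _ ≤ -∑ i, p i * Real.log (q i) := by linarith

theorem sum_negMulLog_le_log_card {p : ι → ℝ} (hp : ∀ i, 0 ≤ p i) (hsum : ∑ i, p i = 1) :
    ∑ i, negMulLog (p i) ≤ Real.log (Fintype.card ι) := by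
  have : Nonempty ι := by
    by_contra h
    rw [not_nonempty_iff] at h
    simp at hsum
  have hcard : (0 : ℝ) < Fintype.card ι := Nat.cast_pos.2 Fintype.card_pos
  have gibbs := sum_negMulLog_le_neg_sum_mul_log (q := fun _ ↦ (Fintype.card ι : ℝ)⁻¹) hp
    (fun _ ↦ (inv_pos.2 hcard).le) (fun _ h ↦ absurd h (inv_pos.2 hcard).ne')
    (by simp [hsum, hcard.ne'])
  simpa [← Finset.sum_mul, hsum] using gibbs

theorem sum_negMulLog_le_add_marginals {d : ι × κ → ℝ} (hd : ∀ x, 0 ≤ d x)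
    (hsum : ∑ x, d x ≤ 1) :
    ∑ x, negMulLog (d x) ≤
      ∑ i, negMulLog (∑ k, d (i, k)) + ∑ k, negMulLog (∑ i, d (i, k)) := by
  set p : ι → ℝ := fun i ↦ ∑ k, d (i, k) with hp
  set q : κ → ℝ := fun k ↦ ∑ i, d (i, k) with hq
  have hp0 (i) : 0 ≤ p i := Finset.sum_nonneg fun _ _ ↦ hd _
  have hq0 (k) : 0 ≤ q k := Finset.sum_nonneg fun _ _ ↦ hd _
  have eq_zero_of_left {x : ι × κ} (h : p x.1 = 0) : d x = 0 :=
    (Finset.sum_eq_zero_iff_of_nonneg fun _ _ ↦ hd _).1 h x.2 (Finset.mem_univ _)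
  have eq_zero_of_right {x : ι × κ} (h : q x.2 = 0) : d x = 0 :=
    (Finset.sum_eq_zero_iff_of_nonneg fun _ _ ↦ hd _).1 h x.1 (Finset.mem_univ _)
  have sum_p : ∑ i, p i = ∑ x, d x := (Fintype.sum_prod_type d).symm
  have sum_q : ∑ k, q k = ∑ x, d x := (Fintype.sum_prod_type_right d).symm
  have sum_mul_le : ∑ x : ι × κ, p x.1 * q x.2 ≤ ∑ x, d x := by
    rw [Fintype.sum_prod_type, ← Fintype.sum_mul_sum, sum_p, sum_q]
    exact mul_le_of_le_one_left (Finset.sum_nonneg fun x _ ↦ hd x) hsum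
  have log_split (x : ι × κ) :
      d x * Real.log (p x.1 * q x.2) = d x * Real.log (p x.1) + d x * Real.log (q x.2) := by
    rcases eq_or_ne (d x) 0 with h | h
    · simp [h]
    · rw [Real.log_mul (mt eq_zero_of_left h) (mt eq_zero_of_right h), mul_add]
  calc ∑ x, negMulLog (d x) ≤ -∑ x : ι × κ, d x * Real.log (p x.1 * q x.2) :=
        sum_negMulLog_le_neg_sum_mul_log hd (fun x ↦ mul_nonneg (hp0 _) (hq0 _))
          (fun _ h ↦ (mul_eq_zero.1 h).elim eq_zero_of_left eq_zero_of_right) sum_mul_le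
    _ = -(∑ i, p i * Real.log (p i) + ∑ k, q k * Real.log (q k)) := by
        simp_rw [log_split, Finset.sum_add_distrib, hp, hq, Finset.sum_mul]
        rw [Fintype.sum_prod_type, Fintype.sum_prod_type_right]
    _ = ∑ i, negMulLog (p i) + ∑ k, negMulLog (q k) := by
        simp only [negMulLog, neg_mul, Finset.sum_neg_distrib, neg_add]

end ClassicalEntropy

section DoublyStochastic

variable {n : Type*} [Fintype n] [DecidableEq n]

theorem sum_le_sum_of_concaveOn_of_mem_doublyStochastic {s : Set ℝ} {f : ℝ → ℝ}
    (hf : ConcaveOn ℝ s f) {M : Matrix n n ℝ} (hM : M ∈ doublyStochastic ℝ n) {x : n → ℝ}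
    (hx : ∀ j, x j ∈ s) : ∑ j, f (x j) ≤ ∑ i, f ((M *ᵥ x) i) := by
  calc ∑ j, f (x j) = ∑ i, ∑ j, M i j * f (x j) := by
        rw [Finset.sum_comm]
        simp_rw [← Finset.sum_mul, sum_col_of_mem_doublyStochastic hM, one_mul]
    _ ≤ ∑ i, f ((M *ᵥ x) i) := Finset.sum_le_sum fun i _ ↦
        hf.le_map_sum (fun _ _ ↦ nonneg_of_mem_doublyStochastic hM)
          (sum_row_of_mem_doublyStochastic hM i) (fun j _ ↦ hx j)

lemma map_norm_sq_mem_doublyStochastic {𝕜 : Type*} [RCLike 𝕜] {U : Matrix n n 𝕜}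
    (hU : U ∈ unitaryGroup n 𝕜) : U.map (‖·‖ ^ 2) ∈ doublyStochastic ℝ n := by
  have row_sum {V : Matrix n n 𝕜} (hV : V ∈ unitaryGroup n 𝕜) (i : n) : ∑ j, ‖V i j‖ ^ 2 = 1 := by
    have := congrFun (congrFun (mem_unitaryGroup_iff.1 hV) i) i
    simp only [mul_apply, star_apply, RCLike.star_def, RCLike.mul_conj, one_apply_eq] at this
    exact_mod_cast this
  refine mem_doublyStochastic_iff_sum.2 ⟨fun i j ↦ sq_nonneg _, row_sum hU, fun j ↦ ?_⟩
  simpa using row_sum (Unitary.star_mem hU) j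

end DoublyStochastic

section VonNeumannEntropy

variable {m n : Type*} [Fintype m] [DecidableEq m] [Fintype n] [DecidableEq n]

lemma isHermitian_diagonal_ofReal {n : Type*} [DecidableEq n] (d : n → ℝ) :
    (diagonal fun i ↦ (d i : ℂ)).IsHermitian :=
  isHermitian_diagonal_of_self_adjoint _ (by ext; simp)

lemma eq_eigenvectorUnitary_mul_diagonal_mul {A : Matrix n n ℂ} (hA : A.IsHermitian) :
    A = hA.eigenvectorUnitary * diagonal (fun i ↦ (hA.eigenvalues i : ℂ)) *
      (hA.eigenvectorUnitary : Matrix n n ℂ)ᴴ :=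
  hA.spectral_theorem.trans (Unitary.conjStarAlgAut_apply ..)

lemma eigenvectorUnitary_conjTranspose_mul_mul {A : Matrix n n ℂ} (hA : A.IsHermitian) :
    (hA.eigenvectorUnitary : Matrix n n ℂ)ᴴ * A * hA.eigenvectorUnitary =
      diagonal fun i ↦ (hA.eigenvalues i : ℂ) :=
  (Unitary.conjStarAlgAut_star_apply ..).symm.trans hA.conjStarAlgAut_star_eigenvectorUnitary

lemma vnEntropy_of_isHermitian {A : Matrix n n ℂ} (hA : A.IsHermitian) :
    vnEntropy A = ∑ i, negMulLog (hA.eigenvalues i) :=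
  dif_pos hA

theorem vnEntropy_unitary_conj {U : Matrix n n ℂ} (hU : U ∈ unitaryGroup n ℂ)
    {A : Matrix n n ℂ} (hA : A.IsHermitian) : vnEntropy (U * A * Uᴴ) = vnEntropy A := by
  have charpoly_eq : (U * A * Uᴴ).charpoly = A.charpoly := by
    rw [charpoly_mul_comm, ← mul_assoc, ← star_eq_conjTranspose, mem_unitaryGroup_iff'.1 hU,
      one_mul]
  have hUA : (U * A * Uᴴ).IsHermitian := isHermitian_mul_mul_conjTranspose U hA
  rw [vnEntropy_of_isHermitian hUA, vnEntropy_of_isHermitian hA,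
    (hUA.eigenvalues_eq_eigenvalues_iff hA).2 charpoly_eq]

lemma vnEntropy_diagonal (d : n → ℝ) :
    vnEntropy (diagonal fun i ↦ (d i : ℂ)) = ∑ i, negMulLog (d i) := by
  have hd := isHermitian_diagonal_ofReal d
  have roots_eq : Finset.univ.val.map (fun i ↦ (hd.eigenvalues i : ℂ)) =
      Finset.univ.val.map fun i ↦ (d i : ℂ) := by
    refine hd.roots_charpoly_eq_eigenvalues.symm.trans ?_
    rw [charpoly_diagonal, Polynomial.roots_prod _ _
      (Finset.prod_ne_zero_iff.2 fun i _ ↦ Polynomial.X_sub_C_ne_zero _)]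
    simp
  rw [vnEntropy_of_isHermitian hd]
  simpa using congrArg (fun r ↦ (r.map fun z : ℂ ↦ negMulLog z.re).sum) roots_eq

lemma mul_diagonal_mul_conjTranspose_apply_self {m : Type*} (A : Matrix m n ℂ) (d : n → ℝ)
    (i : m) : (A * diagonal (fun j ↦ (d j : ℂ)) * Aᴴ) i i = ((A.map (‖·‖ ^ 2) *ᵥ d) i : ℝ) := by
  rw [mul_apply, mulVec, dotProduct, Complex.ofReal_sum]
  refine Finset.sum_congr rfl fun j _ ↦ ?_
  rw [mul_diagonal, conjTranspose_apply, mul_right_comm, RCLike.star_def, RCLike.mul_conj]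
  simp

/-- The diagonal is the image of the spectrum under a doubly stochastic matrix (Schur), so Jensen
applies. -/
theorem vnEntropy_le_sum_negMulLog_diag {A : Matrix n n ℂ} (hA : A.PosSemidef) :
    vnEntropy A ≤ ∑ i, negMulLog (A i i).re := by
  have hH := hA.isHermitian
  have diag_eq (i : n) : (A i i).re =
      ((hH.eigenvectorUnitary : Matrix n n ℂ).map (‖·‖ ^ 2) *ᵥ hH.eigenvalues) i := by
    conv_lhs =>
      rw [eq_eigenvectorUnitary_mul_diagonal_mul hH, mul_diagonal_mul_conjTranspose_apply_self]
    exact Complex.ofReal_re _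
  simp_rw [vnEntropy_of_isHermitian hH, diag_eq]
  exact sum_le_sum_of_concaveOn_of_mem_doublyStochastic Real.concaveOn_negMulLog
    (map_norm_sq_mem_doublyStochastic hH.eigenvectorUnitary.2) hA.eigenvalues_nonneg

lemma sum_eigenvalues_eq_re_trace {A : Matrix n n ℂ} (hA : A.IsHermitian) :
    ∑ i, hA.eigenvalues i = A.trace.re := by
  simp [hA.trace_eq_sum_eigenvalues]

theorem vnEntropy_kronecker {A : Matrix m m ℂ} {B : Matrix n n ℂ} (hA : A.IsHermitian)
    (hB : B.IsHermitian) :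
    vnEntropy (A ⊗ₖ B) = B.trace.re * vnEntropy A + A.trace.re * vnEntropy B := by
  set V := (hA.eigenvectorUnitary : Matrix m m ℂ)
  set W := (hB.eigenvectorUnitary : Matrix n n ℂ)
  set l : m × n → ℝ := fun x ↦ hA.eigenvalues x.1 * hB.eigenvalues x.2
  have diagonalized : A ⊗ₖ B = (V ⊗ₖ W) * diagonal (fun x ↦ (l x : ℂ)) * (V ⊗ₖ W)ᴴ := by
    conv_lhs =>
      rw [eq_eigenvectorUnitary_mul_diagonal_mul hA, eq_eigenvectorUnitary_mul_diagonal_mul hB]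
    simp only [mul_kronecker_mul, diagonal_kronecker_diagonal, conjTranspose_kronecker, l, V, W,
      Complex.ofReal_mul]
  have hVW : V ⊗ₖ W ∈ unitaryGroup (m × n) ℂ :=
    kronecker_mem_unitary hA.eigenvectorUnitary.2 hB.eigenvectorUnitary.2
  rw [diagonalized, vnEntropy_unitary_conj hVW (isHermitian_diagonal_ofReal l),
    vnEntropy_diagonal, vnEntropy_of_isHermitian hA, vnEntropy_of_isHermitian hB,
    ← sum_eigenvalues_eq_re_trace hA, ← sum_eigenvalues_eq_re_trace hB]
  simp only [l, Real.negMulLog_mul, Finset.sum_add_distrib, Fintype.sum_prod_type,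
    ← Finset.sum_mul, ← Finset.mul_sum]

theorem vnEntropy_nonneg {A : Matrix n n ℂ} (hA : IsDensity A) : 0 ≤ vnEntropy A := by
  have hH := hA.1.isHermitian
  have hsum : ∑ i, hH.eigenvalues i = 1 := by simp [sum_eigenvalues_eq_re_trace, hA.2]
  rw [vnEntropy_of_isHermitian hH]
  refine Finset.sum_nonneg fun i _ ↦ Real.negMulLog_nonneg (hA.1.eigenvalues_nonneg i) ?_
  exact hsum ▸ Finset.single_le_sum (fun i _ ↦ hA.1.eigenvalues_nonneg i) (Finset.mem_univ i)

theorem vnEntropy_le_log_card {A : Matrix n n ℂ} (hA : IsDensity A) :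
    vnEntropy A ≤ Real.log (Fintype.card n) := by
  rw [vnEntropy_of_isHermitian hA.1.isHermitian]
  exact sum_negMulLog_le_log_card hA.1.eigenvalues_nonneg
    (by simp [sum_eigenvalues_eq_re_trace, hA.2])

end VonNeumannEntropy

section PartialTrace

variable {μ s : Type*}

lemma ptraceMem_eq_ptraceSys_swap [Fintype μ] (X : Matrix (μ × s) (μ × s) ℂ) :
    ptraceMem X = ptraceSys (X.submatrix Prod.swap Prod.swap) :=
  rfl

lemma trace_ptraceSys [Fintype μ] [Fintype s] (X : Matrix (μ × s) (μ × s) ℂ) :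
    (ptraceSys X).trace = X.trace :=
  (Fintype.sum_prod_type fun x ↦ X x x).symm

lemma trace_ptraceMem [Fintype μ] [Fintype s] (X : Matrix (μ × s) (μ × s) ℂ) :
    (ptraceMem X).trace = X.trace :=
  (Fintype.sum_prod_type_right fun x ↦ X x x).symm

lemma posSemidef_ptraceSys [Fintype s] {X : Matrix (μ × s) (μ × s) ℂ} (hX : X.PosSemidef) :
    (ptraceSys X).PosSemidef := by
  have eq_sum : ptraceSys X = ∑ i, X.submatrix (·, i) (·, i) := by
    ext a b
    simp [ptraceSys, Matrix.sum_apply]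
  rw [eq_sum]
  exact posSemidef_sum _ fun i _ ↦ hX.submatrix _

lemma posSemidef_ptraceMem [Fintype μ] {X : Matrix (μ × s) (μ × s) ℂ} (hX : X.PosSemidef) :
    (ptraceMem X).PosSemidef := by
  rw [ptraceMem_eq_ptraceSys_swap]
  exact posSemidef_ptraceSys (hX.submatrix _)

variable [Fintype μ] [Fintype s]

lemma ptraceSys_kronecker_one_mul [DecidableEq s] (A : Matrix μ μ ℂ)
    (X : Matrix (μ × s) (μ × s) ℂ) :
    ptraceSys ((A ⊗ₖ 1) * X) = A * ptraceSys X := by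
  ext a b
  simp only [ptraceSys, of_apply, mul_apply, kroneckerMap_apply, one_apply, mul_ite, mul_one,
    mul_zero, ite_mul, zero_mul, Fintype.sum_prod_type, Finset.sum_ite_eq, Finset.mem_univ,
    if_true, Finset.mul_sum]
  exact Finset.sum_comm

lemma ptraceSys_mul_kronecker_one [DecidableEq s] (X : Matrix (μ × s) (μ × s) ℂ)
    (A : Matrix μ μ ℂ) :
    ptraceSys (X * (A ⊗ₖ 1)) = ptraceSys X * A := by
  ext a b
  simp only [ptraceSys, of_apply, mul_apply, kroneckerMap_apply, one_apply, mul_ite, mul_one,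
    mul_zero, Fintype.sum_prod_type, Finset.sum_ite_eq', Finset.mem_univ,
    if_true, Finset.sum_mul]
  exact Finset.sum_comm

lemma ptraceSys_one_kronecker_mul_comm [DecidableEq μ] (B : Matrix s s ℂ)
    (X : Matrix (μ × s) (μ × s) ℂ) :
    ptraceSys ((1 ⊗ₖ B) * X) = ptraceSys (X * (1 ⊗ₖ B)) := by
  ext a b
  simp only [ptraceSys, of_apply, mul_apply, kroneckerMap_apply, one_apply, ite_mul, mul_ite,
    one_mul, zero_mul, mul_zero, Fintype.sum_prod_type_right, Finset.sum_ite_eq,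
    Finset.sum_ite_eq', Finset.mem_univ, if_true]
  rw [Finset.sum_comm]
  simp_rw [mul_comm]

theorem ptraceSys_kronecker_unitary_conj [DecidableEq s] (X : Matrix (μ × s) (μ × s) ℂ)
    (V : Matrix μ μ ℂ) {W : Matrix s s ℂ} (hW : W ∈ unitaryGroup s ℂ) :
    ptraceSys ((V ⊗ₖ W)ᴴ * X * (V ⊗ₖ W)) = Vᴴ * ptraceSys X * V := by
  classical
  have split_left : (V ⊗ₖ W)ᴴ = (Vᴴ ⊗ₖ 1) * (1 ⊗ₖ Wᴴ) := by
    rw [conjTranspose_kronecker, ← mul_kronecker_mul, mul_one, one_mul]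
  have split_right : V ⊗ₖ W = (1 ⊗ₖ W) * (V ⊗ₖ 1) := by
    rw [← mul_kronecker_mul, mul_one, one_mul]
  calc ptraceSys ((V ⊗ₖ W)ᴴ * X * (V ⊗ₖ W))
      = ptraceSys ((Vᴴ ⊗ₖ 1) * ((1 ⊗ₖ Wᴴ) * (X * (1 ⊗ₖ W))) * (V ⊗ₖ 1)) := by
        rw [split_left, split_right]
        simp only [mul_assoc]
    _ = Vᴴ * ptraceSys (X * ((1 ⊗ₖ W) * (1 ⊗ₖ Wᴴ))) * V := by
        rw [ptraceSys_mul_kronecker_one, ptraceSys_kronecker_one_mul,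
          ptraceSys_one_kronecker_mul_comm, mul_assoc X]
    _ = Vᴴ * ptraceSys X * V := by
        rw [← mul_kronecker_mul, ← star_eq_conjTranspose W, mem_unitaryGroup_iff.1 hW, mul_one,
          one_kronecker_one, mul_one]

theorem ptraceMem_kronecker_unitary_conj [DecidableEq μ] (X : Matrix (μ × s) (μ × s) ℂ)
    {V : Matrix μ μ ℂ} (hV : V ∈ unitaryGroup μ ℂ) (W : Matrix s s ℂ) :
    ptraceMem ((V ⊗ₖ W)ᴴ * X * (V ⊗ₖ W)) = Wᴴ * ptraceMem X * W := by
  have kronecker_swap : W ⊗ₖ V = (V ⊗ₖ W).submatrix (Equiv.prodComm s μ) (Equiv.prodComm s μ) := by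
    ext
    simp [mul_comm]
  rw [ptraceMem_eq_ptraceSys_swap X, ← ptraceSys_kronecker_unitary_conj _ W hV, kronecker_swap,
    conjTranspose_submatrix, ← Equiv.coe_prodComm, submatrix_mul_equiv, submatrix_mul_equiv]
  rfl

end PartialTrace

section Subadditivity

variable {μ s : Type*} [Fintype μ] [DecidableEq μ] [Fintype s] [DecidableEq s]

theorem vnEntropy_le_ptraceSys_add_ptraceMem {X : Matrix (μ × s) (μ × s) ℂ}
    (hX : X.PosSemidef) (htr : X.trace.re ≤ 1) :
    vnEntropy X ≤ vnEntropy (ptraceSys X) + vnEntropy (ptraceMem X) := by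
  have hM := (posSemidef_ptraceSys hX).isHermitian
  have hS := (posSemidef_ptraceMem hX).isHermitian
  set V := (hM.eigenvectorUnitary : Matrix μ μ ℂ)
  set W := (hS.eigenvectorUnitary : Matrix s s ℂ)
  have hVW : V ⊗ₖ W ∈ unitaryGroup (μ × s) ℂ :=
    kronecker_mem_unitary hM.eigenvectorUnitary.2 hS.eigenvectorUnitary.2
  set Y := (V ⊗ₖ W)ᴴ * X * (V ⊗ₖ W) with hY
  have hYpos : Y.PosSemidef := hX.conjTranspose_mul_mul_same _
  have marginal_mem : ptraceSys Y = diagonal fun a ↦ (hM.eigenvalues a : ℂ) := by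
    rw [hY, ptraceSys_kronecker_unitary_conj X V hS.eigenvectorUnitary.2,
      eigenvectorUnitary_conjTranspose_mul_mul hM]
  have marginal_sys : ptraceMem Y = diagonal fun i ↦ (hS.eigenvalues i : ℂ) := by
    rw [hY, ptraceMem_kronecker_unitary_conj X hM.eigenvectorUnitary.2 W,
      eigenvectorUnitary_conjTranspose_mul_mul hS]
  have sum_sys (a : μ) : ∑ i, (Y (a, i) (a, i)).re = hM.eigenvalues a := by
    simpa [ptraceSys] using congrArg (fun Z ↦ (Z a a).re) marginal_mem
  have sum_mem (i : s) : ∑ a, (Y (a, i) (a, i)).re = hS.eigenvalues i := by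
    simpa [ptraceMem] using congrArg (fun Z ↦ (Z i i).re) marginal_sys
  have sum_diag : ∑ x, (Y x x).re ≤ 1 := by
    rw [Fintype.sum_prod_type]
    simpa [sum_sys, sum_eigenvalues_eq_re_trace, trace_ptraceSys] using htr
  calc vnEntropy X = vnEntropy Y := by
        rw [hY, ← vnEntropy_unitary_conj (Unitary.star_mem hVW) hX.isHermitian,
          star_eq_conjTranspose, conjTranspose_conjTranspose]
    _ ≤ ∑ x, negMulLog (Y x x).re := vnEntropy_le_sum_negMulLog_diag hYpos
    _ ≤ ∑ a, negMulLog (hM.eigenvalues a) + ∑ i, negMulLog (hS.eigenvalues i) := by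
        simpa only [sum_sys, sum_mem] using sum_negMulLog_le_add_marginals
          (fun x ↦ (Complex.nonneg_iff.1 hYpos.diag_nonneg).1) sum_diag
    _ = vnEntropy (ptraceSys X) + vnEntropy (ptraceMem X) := by
        rw [vnEntropy_of_isHermitian hM, vnEntropy_of_isHermitian hS]

end Subadditivity

section MemoryChannel

variable {μ s : Type*} [Fintype μ] [DecidableEq μ] [Fintype s] [DecidableEq s]

lemma IsUnitary.mem_unitaryGroup {U : Matrix s s ℂ} (hU : IsUnitary U) : U ∈ unitaryGroup s ℂ :=
  mem_unitaryGroup_iff.2 hU.1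

lemma isDensity_kronecker {ξ : Matrix μ μ ℂ} {ρ : Matrix s s ℂ} (hξ : IsDensity ξ)
    (hρ : IsDensity ρ) : IsDensity (ξ ⊗ₖ ρ) :=
  ⟨hξ.1.kronecker hρ.1, by rw [trace_kronecker, hξ.2, hρ.2, one_mul]⟩

lemma isDensity_unitary_conj {U X : Matrix s s ℂ} (hU : IsUnitary U) (hX : IsDensity X) :
    IsDensity (U * X * Uᴴ) :=
  ⟨hX.1.mul_mul_conjTranspose_same U, by rw [trace_mul_comm, ← mul_assoc, hU.2, one_mul, hX.2]⟩

lemma isDensity_memUpdate {U : Matrix (μ × s) (μ × s) ℂ} (hU : IsUnitary U) {ξ : Matrix μ μ ℂ}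
    {ρ : Matrix s s ℂ} (hξ : IsDensity ξ) (hρ : IsDensity ρ) : IsDensity (memUpdate U ξ ρ) := by
  have hX := isDensity_unitary_conj hU (isDensity_kronecker hξ hρ)
  exact ⟨posSemidef_ptraceSys hX.1, (trace_ptraceSys _).trans hX.2⟩

theorem vnEntropy_add_le_memUpdate_add_inducedChan {U : Matrix (μ × s) (μ × s) ℂ}
    (hU : IsUnitary U) {ξ : Matrix μ μ ℂ} {ρ : Matrix s s ℂ} (hξ : IsDensity ξ)
    (hρ : IsDensity ρ) :
    vnEntropy ξ + vnEntropy ρ ≤ vnEntropy (memUpdate U ξ ρ) + vnEntropy (inducedChan U ξ ρ) := by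
  have hξρ := isDensity_kronecker hξ hρ
  have hX := isDensity_unitary_conj hU hξρ
  calc vnEntropy ξ + vnEntropy ρ = vnEntropy (ξ ⊗ₖ ρ) := by
        simp [vnEntropy_kronecker hξ.1.isHermitian hρ.1.isHermitian, hξ.2, hρ.2]
    _ = vnEntropy (U * (ξ ⊗ₖ ρ) * Uᴴ) :=
        (vnEntropy_unitary_conj hU.mem_unitaryGroup hξρ.1.isHermitian).symm
    _ ≤ vnEntropy (memUpdate U ξ ρ) + vnEntropy (inducedChan U ξ ρ) :=
        vnEntropy_le_ptraceSys_add_ptraceMem hX.1 (by simp [hX.2])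

theorem repeatable_entropy_bound_general (U : ℕ → Matrix (μ × s) (μ × s) ℂ)
    (hU : ∀ k, IsUnitary (U k)) (ρ : ℕ → Matrix s s ℂ) (hρ : ∀ k, IsDensity (ρ k))
    (ξ : ℕ → Matrix μ μ ℂ) (hξ : IsDensity (ξ 0))
    (hrec : ∀ k, ξ (k + 1) = memUpdate (U k) (ξ k) (ρ k)) (n : ℕ) :
    ∑ k ∈ Finset.range n, (vnEntropy (ρ k) - vnEntropy (inducedChan (U k) (ξ k) (ρ k))) ≤
        vnEntropy (ξ n) - vnEntropy (ξ 0) ∧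
      vnEntropy (ξ n) - vnEntropy (ξ 0) ≤ Real.log (Fintype.card μ) := by
  have isDensity_ξ (k : ℕ) : IsDensity (ξ k) := by
    induction k with
    | zero => exact hξ
    | succ k ih => exact hrec k ▸ isDensity_memUpdate (hU k) ih (hρ k)
  constructor
  · rw [← Finset.sum_range_sub (fun k ↦ vnEntropy (ξ k))]
    refine Finset.sum_le_sum fun k _ ↦ ?_
    rw [hrec k]
    linarith [vnEntropy_add_le_memUpdate_add_inducedChan (hU k) (isDensity_ξ k) (hρ k)]
  · linarith [vnEntropy_le_log_card (isDensity_ξ n), vnEntropy_nonneg hξ]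

end MemoryChannel

theorem repeatable_entropy_bound
    {μ s : Type*} [Fintype μ] [DecidableEq μ] [Fintype s] [DecidableEq s] [Nonempty μ]
    (U : Matrix (μ × s) (μ × s) ℂ) (hU : IsUnitary U)
    (ρ : Matrix s s ℂ) (hρ : IsDensity ρ)
    (ξseq : ℕ → Matrix μ μ ℂ) (hξ0 : IsDensity (ξseq 0))
    (hrec : ∀ k, ξseq (k + 1) = memUpdate U (ξseq k) ρ)
    (n : ℕ) (Eρ : Matrix s s ℂ)
    (hrep : ∀ k < n, inducedChan U (ξseq k) ρ = Eρ) :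
    (n : ℝ) * (vnEntropy ρ - vnEntropy Eρ) ≤ vnEntropy (ξseq n) - vnEntropy (ξseq 0) ∧
    vnEntropy (ξseq n) - vnEntropy (ξseq 0) ≤ Real.log (Fintype.card μ) := by
  have bound := repeatable_entropy_bound_general (fun _ ↦ U) (fun _ ↦ hU) (fun _ ↦ ρ) (fun _ ↦ hρ)
    ξseq hξ0 hrec n
  rwa [Finset.sum_congr rfl fun k hk ↦ by rw [hrep k (Finset.mem_range.1 hk)], Finset.sum_const,
    Finset.card_range, nsmul_eq_mul] at bound
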